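/- For every K > 1 there exists C > 0 (depending only on K) such that the following holds. Let G = (V,E) be a finite simple graph on n vertices with maximum degree at most Δ, where Δ ≥ 3 is an integer, and let μ be the hardcore model on G with fugacities satisfying λ_v ≤ λ_Δ for all v. Let ν_0 be any probability distribution on 2^V supported on independent sets of G, and let v_1, …, v_t be any finite sequence of vertices (repetitions allowed) such that (i) for every vertex v, the number of appearances of neighbors of v in the sequence after the last appearance of v is at most K·Δ, and (ii) every vertex of V appears at least once. Let ν = ν_0 P_{v_1} P_{v_2} ⋯ P_{v_t}. Then for every vertex v ∈ V and every independent set σ⁻ ⊆ V with v ∉ σ⁻, writing σ⁺ = σ⁻ ∪ {v}, one has ν(σ⁺) ≤ C·λ_v·ν(σ⁻). -/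

import Mathlib

/-!
Fix `v` and follow the ratio between the masses of `insert v σ` and `σ`, maximized over `σ`.
An update at `v` draws both masses from the same pair of configurations, in the proportion given by
`μ`, so it brings the ratio down to at most `λ_v`. An update at `u ≠ v` leaves the ratio unchanged
if `u` is not a neighbor of `v`. If `u` is a neighbor, then `insert v σ` forces `u` to be empty,
whereas with `v` empty the update leaves `u` empty with probability at least `1 / (1 + λ_u)`;
hence the ratio grows by a factor of at most `1 + λ_u`. After the last update of `v` there are at
most `K Δ` updates of the latter kind, and `Δ λ_Δ ≤ 6 e`, so the final ratio is at most
`λ_v (1 + λ_Δ) ^ (K Δ) ≤ λ_v exp (6 e K)`.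
-/

open Finset

noncomputable section
attribute [local instance] Classical.propDecidable

/-- Push a distribution `ν` one step through a Markov transition matrix `P`. -/
def stepDist {Ω : Type*} [Fintype Ω] (ν : Ω → ℝ) (P : Ω → Ω → ℝ) : Ω → ℝ :=
  fun y => ∑ x, ν x * P x y

variable {V : Type*} [Fintype V] [DecidableEq V]

/-- `σ` is an independent set of `G`: no two of its elements are adjacent. -/
def IndepSet (G : SimpleGraph V) (σ : Finset V) : Prop :=
  ∀ u ∈ σ, ∀ w ∈ σ, ¬ G.Adj u w

/-- Unnormalized hardcore weight of `σ`: `∏_{v ∈ σ} λ_v` if `σ` is independent, else `0`. -/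
def hcWeight (G : SimpleGraph V) (lam : V → ℝ) (σ : Finset V) : ℝ :=
  if IndepSet G σ then ∏ v ∈ σ, lam v else 0

/-- The hardcore model on `G` with fugacities `lam`, as a distribution on `Finset V`. -/
def hardcore (G : SimpleGraph V) (lam : V → ℝ) (σ : Finset V) : ℝ :=
  hcWeight G lam σ / ∑ τ : Finset V, hcWeight G lam τ

/-- The tree-uniqueness threshold `λ_Δ = (Δ−1)^{Δ−1}/(Δ−2)^Δ`. -/
def hcCrit (Δ : ℕ) : ℝ := ((Δ : ℝ) - 1) ^ (Δ - 1) / ((Δ : ℝ) - 2) ^ Δ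

/-- Glauber single-site update at `v`: resample the membership of `v` from the
conditional distribution of `μ` given the configuration on `V ∖ {v}`. -/
def siteUpdate (μ : Finset V → ℝ) (v : V) (σ τ : Finset V) : ℝ :=
  if τ.erase v = σ.erase v then
    μ τ / (μ (insert v (σ.erase v)) + μ (σ.erase v))
  else 0

/-- Push a distribution through the single-site updates along the list `l`. -/
def scanDist (μ : Finset V → ℝ) (l : List V) (ν : Finset V → ℝ) : Finset V → ℝ :=
  l.foldl (fun ρ v => stepDist ρ (siteUpdate μ v)) ν

/-! ### Single-site updates of a general measure -/

section SiteUpdate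

/-- The mass which `ρ` gives to the configurations that agree with `τ` off the site `u`. -/
def siteMarginal (ρ : Finset V → ℝ) (u : V) (τ : Finset V) : ℝ :=
  ρ (insert u τ) + ρ (τ.erase u)

/-- The conditional probability of `τ` under `μ` given the configuration `τ ∖ {u}` off the site
`u`. It is `0` by convention when the latter has mass `0`. -/
def siteConditional (μ : Finset V → ℝ) (u : V) (τ : Finset V) : ℝ :=
  μ τ / siteMarginal μ u τ

/-- `ρ` is `c`-bounded at the site `v`: occupying `v` multiplies the mass of a configuration by at
most `c`. The function `ρ` need not be a distribution, since the notion is also applied to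
marginals and conditional probabilities. -/
def BoundedAt (ρ : Finset V → ℝ) (v : V) (c : ℝ) : Prop :=
  ∀ ⦃σ⦄, v ∉ σ → ρ (insert v σ) ≤ c * ρ σ

variable {μ ρ f g : Finset V → ℝ} {u v : V} {σ τ : Finset V} {a b c : ℝ}

omit [Fintype V]

lemma siteMarginal_nonneg (hρ : 0 ≤ ρ) (u : V) : 0 ≤ siteMarginal ρ u :=
  fun _ => add_nonneg (hρ _) (hρ _)

lemma siteMarginal_insert_self (ρ : Finset V → ℝ) (u : V) (τ : Finset V) :
    siteMarginal ρ u (insert u τ) = siteMarginal ρ u τ := by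
  simp only [siteMarginal, insert_idem, erase_insert_eq_erase]

lemma siteMarginal_of_notMem (ρ : Finset V → ℝ) (hu : u ∉ τ) :
    siteMarginal ρ u τ = ρ (insert u τ) + ρ τ := by
  rw [siteMarginal, erase_eq_of_notMem hu]

lemma le_siteMarginal (hρ : 0 ≤ ρ) (u : V) (τ : Finset V) : ρ τ ≤ siteMarginal ρ u τ := by
  by_cases hu : u ∈ τ
  · simpa [siteMarginal, insert_eq_of_mem hu] using hρ (τ.erase u)
  · simpa [siteMarginal_of_notMem ρ hu] using hρ (insert u τ)

lemma siteConditional_nonneg (hμ : 0 ≤ μ) (u : V) : 0 ≤ siteConditional μ u :=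
  fun τ => div_nonneg (hμ τ) (siteMarginal_nonneg hμ u τ)

lemma siteConditional_le_one (hμ : 0 ≤ μ) (u : V) (τ : Finset V) : siteConditional μ u τ ≤ 1 :=
  div_le_one_of_le₀ (le_siteMarginal hμ u τ) (siteMarginal_nonneg hμ u τ)

lemma BoundedAt.mono (h : BoundedAt ρ v a) (hρ : 0 ≤ ρ) (hab : a ≤ b) : BoundedAt ρ v b :=
  fun σ hv => (h hv).trans (mul_le_mul_of_nonneg_right hab (hρ σ))

lemma BoundedAt.mul (hf : BoundedAt f v a) (hg : BoundedAt g v b) (hf₀ : 0 ≤ f) (hg₀ : 0 ≤ g) :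
    BoundedAt (f * g) v (a * b) := fun σ hv => by
  calc f (insert v σ) * g (insert v σ) ≤ (a * f σ) * (b * g σ) :=
        mul_le_mul (hf hv) (hg hv) (hg₀ _) ((hf₀ _).trans (hf hv))
    _ = a * b * (f σ * g σ) := by ring

lemma BoundedAt.siteMarginal_of_ne (h : BoundedAt ρ v c) (huv : u ≠ v) :
    BoundedAt (siteMarginal ρ u) v c := fun σ hv => by
  simp only [siteMarginal, mul_add]
  rw [insert_comm, erase_insert_of_ne huv.symm]
  exact add_le_add (h (by simp [huv.symm, hv])) (h (by simp [hv]))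

lemma boundedAt_siteMarginal_self (ρ : Finset V → ℝ) (v : V) :
    BoundedAt (siteMarginal ρ v) v 1 := fun σ _ => by
  rw [siteMarginal_insert_self, one_mul]

lemma BoundedAt.siteConditional_self (h : BoundedAt μ v c) (hμ : 0 ≤ μ) :
    BoundedAt (siteConditional μ v) v c := fun σ hv => by
  rw [siteConditional, siteConditional, siteMarginal_insert_self, ← mul_div_assoc]
  exact div_le_div_of_nonneg_right (h hv) (siteMarginal_nonneg hμ v σ)

lemma BoundedAt.one_le_mul_siteConditional (h : BoundedAt μ u c) (hμ : 0 ≤ μ) (hu : u ∉ τ)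
    (hτ : 0 < μ τ) : 1 ≤ (1 + c) * siteConditional μ u τ := by
  have hpos : 0 < siteMarginal μ u τ := hτ.trans_le (le_siteMarginal hμ u τ)
  rw [siteConditional, ← mul_div_assoc, one_le_div hpos, siteMarginal_of_notMem μ hu]
  linarith [h hu]

end SiteUpdate

section Scan

variable {μ ρ : Finset V → ℝ} {u v : V} {c : ℝ}

lemma stepDist_siteUpdate (μ ρ : Finset V → ℝ) (u : V) :
    stepDist ρ (siteUpdate μ u) = siteConditional μ u * siteMarginal ρ u := by
  funext τ
  have hne : insert u τ ≠ τ.erase u := fun h => notMem_erase u τ (h ▸ mem_insert_self u τ)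
  have hinsert : insert u (τ.erase u) = insert u τ := by grind
  have hsource (σ : Finset V) (hσ : τ.erase u = σ.erase u) : σ = insert u τ ∨ σ = τ.erase u := by
    by_cases hu : u ∈ σ
    · exact Or.inl (by rw [← hinsert, hσ, insert_erase hu])
    · exact Or.inr (by rw [hσ, erase_eq_of_notMem hu])
  calc ∑ σ, ρ σ * siteUpdate μ u σ τ
      = ∑ σ ∈ {insert u τ, τ.erase u}, ρ σ * siteUpdate μ u σ τ := by
        refine (sum_subset (subset_univ _) fun σ _ hσ => ?_).symm
        rw [siteUpdate, if_neg fun h => hσ (by simpa using hsource σ h), mul_zero]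
    _ = ρ (insert u τ) * siteConditional μ u τ + ρ (τ.erase u) * siteConditional μ u τ := by
        rw [sum_pair hne]
        simp only [siteUpdate, erase_insert_eq_erase, erase_idem, hinsert, if_true,
          siteConditional, siteMarginal]
    _ = siteConditional μ u τ * siteMarginal ρ u τ := by rw [siteMarginal]; ring

lemma stepDist_siteUpdate_nonneg (hμ : 0 ≤ μ) (hρ : 0 ≤ ρ) (u : V) :
    0 ≤ stepDist ρ (siteUpdate μ u) := by
  rw [stepDist_siteUpdate]
  exact mul_nonneg (siteConditional_nonneg hμ u) (siteMarginal_nonneg hρ u)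

lemma BoundedAt.stepDist_self (h : BoundedAt μ v c) (hμ : 0 ≤ μ) (hρ : 0 ≤ ρ) :
    BoundedAt (stepDist ρ (siteUpdate μ v)) v c := by
  rw [stepDist_siteUpdate, ← mul_one c]
  exact (h.siteConditional_self hμ).mul (boundedAt_siteMarginal_self ρ v)
    (siteConditional_nonneg hμ v) (siteMarginal_nonneg hρ v)

lemma BoundedAt.stepDist_of_ne {k : ℝ} (h : BoundedAt ρ v c)
    (hk : BoundedAt (siteConditional μ u) v k) (huv : u ≠ v) (hμ : 0 ≤ μ) (hρ : 0 ≤ ρ) :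
    BoundedAt (stepDist ρ (siteUpdate μ u)) v (k * c) := by
  rw [stepDist_siteUpdate]
  exact hk.mul (h.siteMarginal_of_ne huv) (siteConditional_nonneg hμ u) (siteMarginal_nonneg hρ u)

lemma scanDist_cons (μ : Finset V → ℝ) (u : V) (l : List V) (ρ : Finset V → ℝ) :
    scanDist μ (u :: l) ρ = scanDist μ l (stepDist ρ (siteUpdate μ u)) := rfl

lemma scanDist_append (μ : Finset V → ℝ) (l₁ l₂ : List V) (ρ : Finset V → ℝ) :
    scanDist μ (l₁ ++ l₂) ρ = scanDist μ l₂ (scanDist μ l₁ ρ) :=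
  List.foldl_append

lemma scanDist_nonneg (hμ : 0 ≤ μ) (hρ : 0 ≤ ρ) (l : List V) : 0 ≤ scanDist μ l ρ := by
  induction l generalizing ρ with
  | nil => exact hρ
  | cons u _ ih => exact ih (stepDist_siteUpdate_nonneg hμ hρ u)

lemma BoundedAt.scanDist_of_notMem {k : V → ℝ} {l : List V} (h : BoundedAt ρ v c)
    (hk : ∀ u ∈ l, BoundedAt (siteConditional μ u) v (k u)) (hvl : v ∉ l) (hμ : 0 ≤ μ)
    (hρ : 0 ≤ ρ) : BoundedAt (scanDist μ l ρ) v ((l.map k).prod * c) := by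
  induction l generalizing ρ c with
  | nil => simpa [scanDist] using h
  | cons u l ih =>
    obtain ⟨hku, hkl⟩ := List.forall_mem_cons.1 hk
    have huv : u ≠ v := (List.ne_of_not_mem_cons hvl).symm
    rw [scanDist_cons, List.map_cons, List.prod_cons, mul_comm (k u), mul_assoc]
    exact ih (h.stepDist_of_ne hku huv hμ hρ) hkl (List.not_mem_of_not_mem_cons hvl)
      (stepDist_siteUpdate_nonneg hμ hρ u)

end Scan

/-! ### The hardcore model -/

section Hardcore

variable {G : SimpleGraph V} {lam : V → ℝ} {u v : V} {σ : Finset V}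

omit [Fintype V] in
lemma indepSet_insert :
    IndepSet G (insert v σ) ↔ IndepSet G σ ∧ ∀ u ∈ σ, ¬ G.Adj v u := by
  simp only [IndepSet, forall_mem_insert, SimpleGraph.irrefl, not_false_eq_true, true_and,
    G.adj_comm _ v]
  grind

omit [Fintype V] [DecidableEq V] in
lemma hcWeight_nonneg (hlam : 0 ≤ lam) : 0 ≤ hcWeight G lam := fun σ => by
  rw [hcWeight]
  split_ifs
  · exact prod_nonneg fun v _ => hlam v
  · exact le_rfl

omit [DecidableEq V] in
lemma sum_hcWeight_pos (hlam : 0 ≤ lam) : 0 < ∑ σ, hcWeight G lam σ := by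
  refine sum_pos' (fun σ _ => hcWeight_nonneg hlam σ) ⟨∅, mem_univ _, ?_⟩
  simp [hcWeight, IndepSet]

omit [DecidableEq V] in
lemma hardcore_nonneg (hlam : 0 ≤ lam) : 0 ≤ hardcore G lam :=
  fun σ => div_nonneg (hcWeight_nonneg hlam σ) (sum_hcWeight_pos hlam).le

omit [DecidableEq V] in
lemma hardcore_pos (hlam : ∀ v, 0 < lam v) (hσ : IndepSet G σ) : 0 < hardcore G lam σ := by
  refine div_pos ?_ (sum_hcWeight_pos fun v => (hlam v).le)
  rw [hcWeight, if_pos hσ]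
  exact prod_pos fun v _ => hlam v

omit [DecidableEq V] in
lemma hardcore_of_not_indepSet (hσ : ¬ IndepSet G σ) : hardcore G lam σ = 0 := by
  rw [hardcore, hcWeight, if_neg hσ, zero_div]

lemma hardcore_insert (hv : v ∉ σ) (hadj : ∀ u ∈ σ, ¬ G.Adj v u) :
    hardcore G lam (insert v σ) = lam v * hardcore G lam σ := by
  have hiff : IndepSet G (insert v σ) ↔ IndepSet G σ :=
    ⟨fun h => (indepSet_insert.1 h).1, fun h => indepSet_insert.2 ⟨h, hadj⟩⟩
  simp only [hardcore, hcWeight, hiff, prod_insert hv, ← mul_ite_zero, mul_div_assoc]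

lemma boundedAt_hardcore (hlam : 0 ≤ lam) (v : V) : BoundedAt (hardcore G lam) v (lam v) := by
  intro σ hv
  by_cases h : IndepSet G (insert v σ)
  · exact (hardcore_insert hv (indepSet_insert.1 h).2).le
  · rw [hardcore_of_not_indepSet h]
    exact mul_nonneg (hlam v) (hardcore_nonneg hlam σ)

lemma siteMarginal_hardcore_insert (huv : u ≠ v) (hv : v ∉ σ) (huadj : ¬ G.Adj v u)
    (hadj : ∀ w ∈ σ, ¬ G.Adj v w) :
    siteMarginal (hardcore G lam) u (insert v σ) =
      lam v * siteMarginal (hardcore G lam) u σ := by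
  rw [siteMarginal, siteMarginal, insert_comm, erase_insert_of_ne huv.symm, mul_add,
    hardcore_insert (by simp [huv.symm, hv]) (by simpa [huadj] using hadj),
    hardcore_insert (by simp [hv]) fun w hw => hadj w (mem_of_mem_erase hw)]

lemma boundedAt_siteConditional_hardcore_of_not_adj (hlam : ∀ v, 0 < lam v) (huv : u ≠ v)
    (huadj : ¬ G.Adj v u) : BoundedAt (siteConditional (hardcore G lam) u) v 1 := by
  intro σ hv
  rw [one_mul]
  by_cases h : IndepSet G (insert v σ)
  · have hadj := (indepSet_insert.1 h).2
    rw [siteConditional, siteConditional, hardcore_insert hv hadj,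
      siteMarginal_hardcore_insert huv hv huadj hadj, mul_div_mul_left _ _ (hlam v).ne']
  · rw [siteConditional, hardcore_of_not_indepSet h, zero_div]
    exact siteConditional_nonneg (hardcore_nonneg fun v => (hlam v).le) u σ

lemma boundedAt_siteConditional_hardcore_of_adj (hlam : ∀ v, 0 < lam v) (huadj : G.Adj v u) :
    BoundedAt (siteConditional (hardcore G lam) u) v (1 + lam u) := by
  have hlam₀ : 0 ≤ lam := fun v => (hlam v).le
  have hμ : 0 ≤ hardcore G lam := hardcore_nonneg hlam₀
  intro σ _
  by_cases h : IndepSet G (insert v σ)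
  · obtain ⟨hσ, hadj⟩ := indepSet_insert.1 h
    calc siteConditional (hardcore G lam) u (insert v σ) ≤ 1 := siteConditional_le_one hμ u _
      _ ≤ (1 + lam u) * siteConditional (hardcore G lam) u σ :=
        (boundedAt_hardcore hlam₀ u).one_le_mul_siteConditional hμ (fun hu => hadj u hu huadj)
          (hardcore_pos hlam hσ)
  · rw [siteConditional, hardcore_of_not_indepSet h, zero_div]
    exact mul_nonneg (add_nonneg zero_le_one (hlam₀ u)) (siteConditional_nonneg hμ u σ)

lemma boundedAt_scanDist_hardcore [DecidableRel G.Adj] {ρ : Finset V → ℝ}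
    (hlam : ∀ v, 0 < lam v) (hρ : 0 ≤ ρ) (l₁ : List V) {l₂ : List V} (hv : v ∉ l₂) :
    BoundedAt (scanDist (hardcore G lam) (l₁ ++ v :: l₂) ρ) v
      (((l₂.filter fun u => G.Adj v u).map fun u => 1 + lam u).prod * lam v) := by
  have hlam₀ : 0 ≤ lam := fun v => (hlam v).le
  have hμ : 0 ≤ hardcore G lam := hardcore_nonneg hlam₀
  have hρ₁ := scanDist_nonneg hμ hρ l₁
  have hfactor (u : V) (hu : u ∈ l₂) :
      BoundedAt (siteConditional (hardcore G lam) u) v (if G.Adj v u then 1 + lam u else 1) := by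
    split_ifs with huadj
    · exact boundedAt_siteConditional_hardcore_of_adj hlam huadj
    · exact boundedAt_siteConditional_hardcore_of_not_adj hlam (ne_of_mem_of_not_mem hu hv) huadj
  have hscan := ((boundedAt_hardcore hlam₀ v).stepDist_self hμ hρ₁).scanDist_of_notMem hfactor hv
    hμ (stepDist_siteUpdate_nonneg hμ hρ₁ v)
  rw [scanDist_append, scanDist_cons]
  simpa [List.prod_map_ite] using hscan

end Hardcore

/-! ### The uniqueness threshold -/

section Threshold

variable {Δ : ℕ}

lemma hcCrit_pos (hΔ : 3 ≤ Δ) : 0 < hcCrit Δ := by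
  have h : (3 : ℝ) ≤ Δ := mod_cast hΔ
  exact div_pos (pow_pos (by linarith) _) (pow_pos (by linarith) _)

lemma natCast_mul_hcCrit_le (hΔ : 3 ≤ Δ) : Δ * hcCrit Δ ≤ 6 * Real.exp 1 := by
  obtain ⟨x, rfl⟩ : ∃ x, Δ = x + 2 := ⟨Δ - 2, by omega⟩
  have hx : (1 : ℝ) ≤ x := by exact_mod_cast (by omega : 1 ≤ x)
  have hfactor : ((x + 2 : ℕ) : ℝ) * hcCrit (x + 2) =
      ((x + 2) * (x + 1) / x ^ 2) * (1 + (x : ℝ)⁻¹) ^ x := by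
    have hbase : 1 + (x : ℝ)⁻¹ = (x + 1) / x := by field_simp
    rw [hcCrit, hbase, div_pow, show x + 2 - 1 = x + 1 by omega]
    push_cast
    rw [show (x : ℝ) + 2 - 1 = x + 1 by ring, show (x : ℝ) + 2 - 2 = x by ring]
    field_simp
    ring
  rw [hfactor]
  refine mul_le_mul ?_ Real.one_add_inv_pow_le_exp (by positivity) (by norm_num)
  rw [div_le_iff₀ (by positivity)]
  nlinarith

lemma one_add_hcCrit_pow_le {K : ℝ} {n : ℕ} (hΔ : 3 ≤ Δ) (hn : n ≤ K * Δ) :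
    (1 + hcCrit Δ) ^ n ≤ Real.exp (K * (6 * Real.exp 1)) := by
  have hcrit := hcCrit_pos hΔ
  have hK : 0 ≤ K := nonneg_of_mul_nonneg_left (n.cast_nonneg.trans hn) (by positivity)
  have hexp : 1 + hcCrit Δ ≤ Real.exp (hcCrit Δ) := by
    linarith [Real.add_one_le_exp (hcCrit Δ)]
  calc (1 + hcCrit Δ) ^ n ≤ Real.exp (hcCrit Δ) ^ n := by gcongr
    _ = Real.exp (n * hcCrit Δ) := (Real.exp_nat_mul _ _).symm
    _ ≤ Real.exp (K * Δ * hcCrit Δ) := by gcongr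
    _ = Real.exp (K * (Δ * hcCrit Δ)) := by rw [mul_assoc]
    _ ≤ Real.exp (K * (6 * Real.exp 1)) :=
      Real.exp_le_exp.2 (mul_le_mul_of_nonneg_left (natCast_mul_hcCrit_le hΔ) hK)

end Threshold

lemma exists_eq_append_cons_notMem_right {α : Type*} {a : α} {l : List α} (h : a ∈ l) :
    ∃ l₁ l₂, l = l₁ ++ a :: l₂ ∧ a ∉ l₂ := by
  obtain ⟨l₂, l₁, hl, ha⟩ := List.eq_append_cons_of_mem (List.mem_reverse.2 h)
  exact ⟨l₁.reverse, l₂.reverse, by simpa using congrArg List.reverse hl, by simpa using ha⟩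

theorem update_sequence_bounded_general {G : SimpleGraph V} [DecidableRel G.Adj] {Δ : ℕ}
    (hΔ : 3 ≤ Δ) {lam : V → ℝ} (hpos : ∀ u, 0 < lam u) {v : V}
    (hlam : ∀ u, G.Adj v u → lam u ≤ hcCrit Δ) {ν₀ : Finset V → ℝ} (hν₀ : 0 ≤ ν₀) {K : ℝ}
    {l : List V}
    (hcount : ∀ l₁ l₂ : List V, l = l₁ ++ v :: l₂ → v ∉ l₂ →
      ((l₂.filter fun u => G.Adj v u).length : ℝ) ≤ K * Δ)
    (hmem : v ∈ l) :
    BoundedAt (scanDist (hardcore G lam) l ν₀) v (Real.exp (K * (6 * Real.exp 1)) * lam v) := by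
  obtain ⟨l₁, l₂, rfl, hv⟩ := exists_eq_append_cons_notMem_right hmem
  have hμ : 0 ≤ hardcore G lam := hardcore_nonneg fun u => (hpos u).le
  refine (boundedAt_scanDist_hardcore hpos hν₀ l₁ hv).mono (scanDist_nonneg hμ hν₀ _)
    (mul_le_mul_of_nonneg_right ?_ (hpos v).le)
  have hfactor (u : V) (hu : u ∈ l₂.filter fun u => G.Adj v u) : 1 + lam u ≤ 1 + hcCrit Δ :=
    add_le_add le_rfl (hlam u (by simpa using List.of_mem_filter hu))
  calc ((l₂.filter fun u => G.Adj v u).map fun u => 1 + lam u).prod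
      ≤ ((l₂.filter fun u => G.Adj v u).map fun _ => 1 + hcCrit Δ).prod :=
        List.prod_map_le_prod_map₀ _ _ (fun u _ => add_nonneg zero_le_one (hpos u).le) hfactor
    _ = (1 + hcCrit Δ) ^ (l₂.filter fun u => G.Adj v u).length := by
        rw [List.map_const', List.prod_replicate]
    _ ≤ Real.exp (K * (6 * Real.exp 1)) := one_add_hcCrit_pow_le hΔ (hcount l₁ l₂ rfl hv)

/-- `C·λ_v`-boundedness of the distribution obtained by applying a
sequence of single-site updates in which (i) at most `K·Δ` neighbors of each vertex
are updated after its last update and (ii) every vertex is updated at least once. -/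
theorem update_sequence_bounded :
    ∀ K : ℝ, 1 < K →
    ∃ C : ℝ, 0 < C ∧
      ∀ (V : Type) [Fintype V] [DecidableEq V] (G : SimpleGraph V)
        [DecidableRel G.Adj] (Δ : ℕ), 3 ≤ Δ →
        (∀ v : V, G.degree v ≤ Δ) →
        ∀ lam : V → ℝ, (∀ v, 0 < lam v) → (∀ v, lam v ≤ hcCrit Δ) →
        ∀ ν₀ : Finset V → ℝ, (∀ σ, 0 ≤ ν₀ σ) → (∑ σ : Finset V, ν₀ σ) = 1 →
          (∀ σ, ¬ IndepSet G σ → ν₀ σ = 0) →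
        ∀ l : List V,
          (∀ (v : V) (l₁ l₂ : List V), l = l₁ ++ v :: l₂ → v ∉ l₂ →
            ((l₂.filter fun u => G.Adj v u).length : ℝ) ≤ K * Δ) →
          (∀ v : V, v ∈ l) →
        ∀ (v : V) (σm : Finset V), IndepSet G σm → v ∉ σm →
          scanDist (hardcore G lam) l ν₀ (insert v σm) ≤
            C * lam v * scanDist (hardcore G lam) l ν₀ σm := by
  intro K _
  refine ⟨Real.exp (K * (6 * Real.exp 1)), Real.exp_pos _, ?_⟩
  intro V _ _ G _ Δ hΔ _ lam hpos hlam ν₀ hν₀ _ _ l hcount hmem v σm _ hv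
  exact update_sequence_bounded_general hΔ hpos (fun u _ => hlam u) hν₀ (hcount v) (hmem v) hv
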